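/- Let F be a field with char F ≠ 2 and let H be the Highwater algebra over F. The F-linear map λ : H → F defined by λ(a_i) = 1 for all i ∈ ℤ and λ(s_j) = 0 for all j ≥ 1 satisfies λ(x·y) = λ(x)λ(y) for all x, y ∈ H (i.e., H is baric). Consequently, the symmetric bilinear form (x, y) := λ(x)λ(y) satisfies (x·y, z) = (x, y·z) for all x, y, z ∈ H, i.e., it is a Frobenius form on H. -/

import Mathlib

/- STATEMENT 5: the Highwater algebra is baric via the weight map λ(a_i) = 1,\nλ(s_j) = 0, and (x, y) := λ(x)λ(y) is a Frobenius form. -/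

/-- The underlying vector space of the Highwater algebra: formal `F`-linear combinations
of basis elements `a_i` (`i : ℤ`, encoded `Sum.inl i`) and `s_j` (`j ≥ 1`, encoded
`Sum.inr (j - 1)`). -/
abbrev HW (F : Type*) [Field F] := (ℤ ⊕ ℕ) →₀ F

variable (F : Type*) [Field F]

/-- The axis `a_i` of the Highwater algebra. -/
noncomputable def hwa (i : ℤ) : HW F := Finsupp.single (Sum.inl i) 1

/-- The element `s_j` of the Highwater algebra (`s_0 = 0`). -/
noncomputable def hws : ℕ → HW F
  | 0 => 0
  | j + 1 => Finsupp.single (Sum.inr j) 1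

/-- Product of two basis elements of the Highwater algebra:
`a_i · a_k = (1/2)(a_i + a_k) + s_{|i-k|}`,
`a_i · s_j = -(3/4) a_i + (3/8)(a_{i-j} + a_{i+j}) + (3/2) s_j`,
`s_j · s_k = (3/4)(s_j + s_k) - (3/8)(s_{|j-k|} + s_{j+k})`. -/
noncomputable def hwBM : ℤ ⊕ ℕ → ℤ ⊕ ℕ → HW F
  | Sum.inl i, Sum.inl k => ((1 : F) / 2) • (hwa F i + hwa F k) + hws F (i - k).natAbs
  | Sum.inl i, Sum.inr j =>
      (-(3 : F) / 4) • hwa F i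
        + ((3 : F) / 8) • (hwa F (i - ((j : ℤ) + 1)) + hwa F (i + ((j : ℤ) + 1)))
        + ((3 : F) / 2) • hws F (j + 1)
  | Sum.inr j, Sum.inl i =>
      (-(3 : F) / 4) • hwa F i
        + ((3 : F) / 8) • (hwa F (i - ((j : ℤ) + 1)) + hwa F (i + ((j : ℤ) + 1)))
        + ((3 : F) / 2) • hws F (j + 1)
  | Sum.inr j, Sum.inr k =>
      ((3 : F) / 4) • (hws F (j + 1) + hws F (k + 1))
        - ((3 : F) / 8) • (hws F ((j : ℤ) - (k : ℤ)).natAbs + hws F (j + k + 2))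

/-- The multiplication of the Highwater algebra: the bilinear extension of `hwBM`. -/
noncomputable def hwMul (x y : HW F) : HW F :=
  x.sum fun i ci => y.sum fun j cj => (ci * cj) • hwBM F i j

/-- A linear map taking the value `1` on every `a_i` and `0` on every `s_j` is multiplicative
on the basis of the Highwater algebra. -/
theorem map_hwBM_eq_mul (h2 : (2 : F) ≠ 0) (lam : HW F →ₗ[F] F)
    (hla : ∀ i : ℤ, lam (hwa F i) = 1) (hls : ∀ j : ℕ, lam (hws F j) = 0) (p q : ℤ ⊕ ℕ) :
    lam (hwBM F p q) = lam (Finsupp.single p 1) * lam (Finsupp.single q 1) := by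
  have h4 : (4 : F) ≠ 0 := by
    rw [show (4 : F) = 2 * 2 by norm_num]
    exact mul_ne_zero h2 h2
  have h8 : (8 : F) ≠ 0 := by
    rw [show (8 : F) = 4 * 2 by norm_num]
    exact mul_ne_zero h4 h2
  have ha (i : ℤ) : lam (Finsupp.single (Sum.inl i) 1) = 1 := hla i
  have hs (j : ℕ) : lam (Finsupp.single (Sum.inr j) 1) = 0 := hls (j + 1)
  rcases p with i | j <;> rcases q with k | l <;>
    simp only [hwBM, map_add, map_sub, map_smul, hla, hls, ha, hs, smul_eq_mul] <;>
    field_simp <;> norm_num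

/-- A linear map that is multiplicative on the basis of the Highwater algebra is
multiplicative. -/
theorem map_hwMul_eq_mul (lam : HW F →ₗ[F] F)
    (hlam : ∀ p q : ℤ ⊕ ℕ,
      lam (hwBM F p q) = lam (Finsupp.single p 1) * lam (Finsupp.single q 1)) (x y : HW F) :
    lam (hwMul F x y) = lam x * lam y := by
  have expand (z : HW F) : lam z = z.sum fun p c => c * lam (Finsupp.single p 1) := by
    conv_lhs => rw [← Finsupp.sum_single z]
    rw [map_finsuppSum]
    refine Finsupp.sum_congr fun p _ => ?_
    rw [← smul_eq_mul, ← map_smul, Finsupp.smul_single_one]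
  rw [expand x, expand y, hwMul]
  simp only [Finsupp.sum, map_sum, map_smul, smul_eq_mul, hlam, Finset.sum_mul_sum]
  exact Finset.sum_congr rfl fun p _ => Finset.sum_congr rfl fun q _ => mul_mul_mul_comm _ _ _ _

theorem highwater_baric (h2 : ringChar F ≠ 2) (lam : HW F →ₗ[F] F)
    (hla : ∀ i : ℤ, lam (hwa F i) = 1) (hls : ∀ j : ℕ, 1 ≤ j → lam (hws F j) = 0) :
    (∀ x y : HW F, lam (hwMul F x y) = lam x * lam y) ∧
    (∀ x y z : HW F, lam (hwMul F x y) * lam z = lam x * lam (hwMul F y z)) := by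
  have hs (j : ℕ) : lam (hws F j) = 0 := by
    rcases j with _ | j
    · simp [hws]
    · exact hls (j + 1) j.succ_pos
  have hmul := map_hwMul_eq_mul F lam (map_hwBM_eq_mul F (Ring.two_ne_zero h2) lam hla hs)
  refine ⟨hmul, fun x y z => ?_⟩
  rw [hmul, hmul, mul_assoc]
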